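/- arXiv:2011.11273 — 3 statements merged into one kernel-verified Lean document; each statement's English description precedes it below -/
import Mathlib

section
/- Let k ≥ 1, let X be a set, let τ : X → X be an involution, and let μ be any set of multiplicity vectors. Then the pair (X, B_{τ,μ}) satisfies the four axioms of a k-biquandle. -/
/-!
The multiplicity vector of a tuple only depends on the `τ`-orbits of its entries, so it does not
change when `τ` is applied to some of the coordinates (`multVec_congr`). Hence whether
`applyOn (condInv τ μ) S` acts on a tuple, namely by `τ` on the coordinates in `S`, is not affected
by a prior application of `applyOn (condInv τ μ) T`, and any two such operators commute
(`applyOn_condInv_comm`). Far commutativity is a special case, and the two sides of the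
tetrahedron equation are products of the same commuting operators in opposite orders.
-/

/-- The map `X^n → X^n` acting as `B` on the coordinates indexed by the `k`-element
subset `S` (taken in increasing order) and as the identity on the remaining coordinates. -/
def applyOn {X : Type*} {n k : ℕ} (B : (Fin k → X) → (Fin k → X))
    (S : Finset (Fin n)) (h : S.card = k) (x : Fin n → X) : Fin n → X :=
  fun i => if hi : i ∈ S then
    B (fun j => x ((S.orderIsoOfFin h j : {a // a ∈ S}) : Fin n)) ((S.orderIsoOfFin h).symm ⟨i, hi⟩)
  else x i

/-- A biquandle for free `k`-braids: a map `B : X^k → X^k` satisfying the four axioms. -/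
structure IsBiquandle {X : Type*} (k : ℕ) (B : (Fin k → X) → (Fin k → X)) : Prop where
  perm_equivariant : ∀ (π : Equiv.Perm (Fin k)) (x : Fin k → X), B (x ∘ π) = B x ∘ π
  involutive : ∀ x, B (B x) = x
  far_comm : ∀ p : ℕ, 2 ≤ p → p ≤ k - 1 →
    ∀ (h1 : (Finset.univ.filter (fun i : Fin (2*k-1) => (i : ℕ) < k)).card = k)
      (h2 : (Finset.univ.filter (fun i : Fin (2*k-1) => p ≤ (i : ℕ) ∧ (i : ℕ) < k + p)).card = k),
      applyOn B _ h1 ∘ applyOn B _ h2 = applyOn B _ h2 ∘ applyOn B _ h1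
  tetrahedron : ∀ h : ∀ i : Fin (k+1), ((Finset.univ : Finset (Fin (k+1))).erase i).card = k,
      (List.ofFn (fun i : Fin (k+1) => applyOn B (Finset.univ.erase i) (h i))).foldr (· ∘ ·) id
      = (List.ofFn (fun i : Fin (k+1) => applyOn B (Finset.univ.erase i) (h i))).reverse.foldr (· ∘ ·) id

/-- A non-fixed orbit of an involution `τ`: a two-element set `{p, τ p}` with `τ p ≠ p`. -/
def NonfixedOrbit {X : Type*} (τ : X → X) := { o : Set X // ∃ p, τ p ≠ p ∧ o = {p, τ p} }

/-- The multiplicity vector of a tuple `x ∈ X^k`: it assigns to each non-fixed orbit `o`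
of `τ` the number of indices `j` with `x j ∈ o`. -/
noncomputable def multVec {X : Type*} {k : ℕ} (τ : X → X) (x : Fin k → X) : NonfixedOrbit τ → ℕ :=
  fun o => Nat.card { j : Fin k // x j ∈ o.1 }

open Classical in
/-- The conditional involution map `B_{τ,μ}`: it applies `τ` to every coordinate if the
multiplicity vector of the tuple belongs to `μ`, and is the identity otherwise. -/
noncomputable def condInv {X : Type*} {k : ℕ} (τ : X → X) (μ : Set (NonfixedOrbit τ → ℕ))
    (x : Fin k → X) : Fin k → X :=
  if multVec τ x ∈ μ then τ ∘ x else x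

lemma tau_mem_orbit_iff {X : Type*} {τ : X → X} (hτ : Function.Involutive τ)
    (o : NonfixedOrbit τ) (a : X) : τ a ∈ o.1 ↔ a ∈ o.1 := by
  obtain ⟨_, p, -, rfl⟩ := o
  have h1 : τ a = p ↔ a = τ p := hτ.eq_iff
  have h2 : τ a = τ p ↔ a = p := hτ.injective.eq_iff
  simp only [Set.mem_insert_iff, Set.mem_singleton_iff, h1, h2]
  exact or_comm

lemma multVec_congr {X : Type*} {k : ℕ} {τ : X → X} (hτ : Function.Involutive τ)
    {x y : Fin k → X} (h : ∀ j, y j = x j ∨ y j = τ (x j)) : multVec τ y = multVec τ x := by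
  funext o
  have hmem : ∀ j, y j ∈ o.1 ↔ x j ∈ o.1 := by
    intro j
    rcases h j with hj | hj <;> rw [hj]
    exact tau_mem_orbit_iff hτ o (x j)
  exact Nat.card_congr (Equiv.subtypeEquivRight hmem)

lemma multVec_comp_perm {X : Type*} {k : ℕ} (τ : X → X) (π : Equiv.Perm (Fin k))
    (x : Fin k → X) : multVec τ (x ∘ π) = multVec τ x := by
  funext o
  exact Nat.card_congr (π.subtypeEquiv fun _ => Iff.rfl)

open Classical in
lemma applyOn_condInv {X : Type*} {n k : ℕ} (τ : X → X) (μ : Set (NonfixedOrbit τ → ℕ))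
    (S : Finset (Fin n)) (h : S.card = k) (x : Fin n → X) (i : Fin n) :
    applyOn (condInv (k := k) τ μ) S h x i =
      if i ∈ S ∧ multVec τ (fun j => x (S.orderIsoOfFin h j)) ∈ μ then τ (x i) else x i := by
  unfold applyOn condInv
  by_cases hi : i ∈ S
  · by_cases hm : multVec τ (fun j => x (S.orderIsoOfFin h j)) ∈ μ
    · rw [dif_pos hi, if_pos hm, if_pos ⟨hi, hm⟩]
      simp only [Function.comp_apply, OrderIso.apply_symm_apply]
    · rw [dif_pos hi, if_neg hm, if_neg fun h => hm h.2]
      simp only [OrderIso.apply_symm_apply]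
  · rw [dif_neg hi, if_neg fun h => hi h.1]

lemma applyOn_condInv_eq_or {X : Type*} {n k : ℕ} (τ : X → X) (μ : Set (NonfixedOrbit τ → ℕ))
    (S : Finset (Fin n)) (h : S.card = k) (x : Fin n → X) (i : Fin n) :
    applyOn (condInv (k := k) τ μ) S h x i = x i ∨
      applyOn (condInv (k := k) τ μ) S h x i = τ (x i) := by
  classical
  rw [applyOn_condInv]
  split_ifs
  · exact Or.inr rfl
  · exact Or.inl rfl

/-- Any two of the operators `applyOn (condInv τ μ) S` commute, however the subsets overlap. -/
lemma applyOn_condInv_comm {X : Type*} {n k : ℕ} {τ : X → X} (hτ : Function.Involutive τ)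
    (μ : Set (NonfixedOrbit τ → ℕ)) (S T : Finset (Fin n)) (hS : S.card = k) (hT : T.card = k) :
    applyOn (condInv (k := k) τ μ) S hS ∘ applyOn (condInv (k := k) τ μ) T hT =
      applyOn (condInv (k := k) τ μ) T hT ∘ applyOn (condInv (k := k) τ μ) S hS := by
  classical
  funext x i
  simp only [Function.comp_apply]
  rw [applyOn_condInv τ μ S hS (applyOn _ T hT x), applyOn_condInv τ μ T hT (applyOn _ S hS x),
    multVec_congr hτ fun j => applyOn_condInv_eq_or τ μ T hT x (S.orderIsoOfFin hS j),
    multVec_congr hτ fun j => applyOn_condInv_eq_or τ μ S hS x (T.orderIsoOfFin hT j),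
    applyOn_condInv, applyOn_condInv]
  split_ifs <;> rfl

/-- for any involution `τ : X → X` and any set `μ` of multiplicity vectors,
the conditional involution map `B_{τ,μ}` is a `k`-biquandle. -/
theorem condInv_isBiquandle {X : Type*} (k : ℕ) (hk : 1 ≤ k)
    (τ : X → X) (hτ : Function.Involutive τ) (μ : Set (NonfixedOrbit τ → ℕ)) :
    IsBiquandle k (condInv (k := k) τ μ) := by
  refine ⟨fun π x => ?_, fun x => ?_, fun p _ _ h1 h2 => ?_, fun h => ?_⟩
  · unfold condInv
    rw [multVec_comp_perm]
    split_ifs <;> rfl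
  · unfold condInv
    by_cases hm : multVec τ x ∈ μ
    · have hm' : multVec τ (τ ∘ x) ∈ μ := by
        rwa [multVec_congr hτ (x := x) (y := τ ∘ x) fun j => Or.inr rfl]
      rw [if_pos hm, if_pos hm', ← Function.comp_assoc, hτ.comp_self, Function.id_comp]
    · rw [if_neg hm, if_neg hm]
  · exact applyOn_condInv_comm hτ μ _ _ h1 h2
  · refine (List.reverse_perm _).symm.foldr_eq' ?_ id
    intro f hf g hg z
    obtain ⟨i, rfl⟩ := List.mem_ofFn.1 hf
    obtain ⟨j, rfl⟩ := List.mem_ofFn.1 hg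
    simp only [← Function.comp_assoc]
    rw [applyOn_condInv_comm hτ]
end

section
/- Let X = ℤ/2ℤ. Every map B : X³ → X³ satisfying the four axioms of a 3-biquandle is either the identity map or is isomorphic (as a 3-biquandle) to the Gaussian 3-biquandle B_G(x_1,x_2,x_3) = (x_1+1, x_2+1, x_3+1). In other words, up to isomorphism there is a unique nontrivial 3-biquandle on ℤ/2ℤ, namely the Gaussian one. -/
/-- `applyOn B S` computed through any strictly increasing enumeration `e` of `S`. -/
lemma applyOn_apply_of_strictMono {X : Type*} {n k : ℕ} (B : (Fin k → X) → (Fin k → X))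
    (S : Finset (Fin n)) (h : S.card = k) (e : Fin k → Fin n) (he : StrictMono e)
    (hS : ∀ j, e j ∈ S) (x : Fin n → X) (j : Fin k) :
    applyOn B S h x (e j) = B (x ∘ e) j := by
  have hu : e = S.orderEmbOfFin h := Finset.orderEmbOfFin_unique h hS he
  have hu' : ∀ j, ((S.orderIsoOfFin h j : {a // a ∈ S}) : Fin n) = e j := by
    intro j
    rw [hu, Finset.coe_orderIsoOfFin_apply]
  have hj : (S.orderIsoOfFin h).symm ⟨e j, hS j⟩ = j := by
    rw [OrderIso.symm_apply_eq]
    exact Subtype.ext (hu' j).symm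
  simp only [applyOn, dif_pos (hS j), hj, hu']
  rfl

lemma applyOn_apply_of_notMem {X : Type*} {n k : ℕ} (B : (Fin k → X) → (Fin k → X))
    (S : Finset (Fin n)) (h : S.card = k) (x : Fin n → X) (i : Fin n) (hi : i ∉ S) :
    applyOn B S h x i = x i := by
  simp [applyOn, hi]

/-- The first coordinate of the far commutativity relation between the triples
`{1, 2, 3}` and `{3, 4, 5}`. -/
lemma far_comm_coord {X : Type*} {B : (Fin 3 → X) → (Fin 3 → X)} (hB : IsBiquandle 3 B)
    (x y z u v : X) : B ![x, y, B ![z, u, v] 0] 0 = B ![x, y, z] 0 := by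
  have key := congrFun (congrFun
    (hB.far_comm 2 le_rfl (by norm_num) (by decide) (by decide)) ![x, y, z, u, v]) (0 : Fin 5)
  simp only [Function.comp_apply] at key
  have m1 : StrictMono (![0, 1, 2] : Fin 3 → Fin 5) := by decide
  have m2 : StrictMono (![2, 3, 4] : Fin 3 → Fin 5) := by decide
  have first := fun w => applyOn_apply_of_strictMono B
    (Finset.univ.filter (fun i : Fin (2*3-1) => (i : ℕ) < 3)) (by decide)
    ![0, 1, 2] m1 (by decide) w 0
  have second := applyOn_apply_of_strictMono B
    (Finset.univ.filter (fun i : Fin (2*3-1) => 2 ≤ (i : ℕ) ∧ (i : ℕ) < 3 + 2)) (by decide)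
    ![2, 3, 4] m2 (by decide) ![x, y, z, u, v] 0
  have fixed := fun w i hi => applyOn_apply_of_notMem B
    (Finset.univ.filter (fun i : Fin (2*3-1) => 2 ≤ (i : ℕ) ∧ (i : ℕ) < 3 + 2)) (by decide)
    w i hi
  rw [fixed _ 0 (by decide)] at key
  have hz : (![x, y, z, u, v] : Fin 5 → X) ∘ (![2, 3, 4] : Fin 3 → Fin 5) = ![z, u, v] := by
    funext j; fin_cases j <;> rfl
  have hx : (![x, y, z, u, v] : Fin 5 → X) ∘ (![0, 1, 2] : Fin 3 → Fin 5) = ![x, y, z] := by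
    funext j; fin_cases j <;> rfl
  have vec : ∀ w : Fin 3 → X, w = ![w 0, w 1, w 2] := by
    intro w; funext j; fin_cases j <;> rfl
  have lhs := (first _).symm.trans (key.trans (first _))
  rw [vec (applyOn B _ _ _ ∘ _)] at lhs
  have t0 := fixed ![x, y, z, u, v] (0 : Fin 5) (by decide)
  have t1 := fixed ![x, y, z, u, v] (1 : Fin 5) (by decide)
  have t2 := second.trans (congrArg (fun w => B w 0) hz)
  have hw : ∀ a b c a' b' c' : X, a = a' → b = b' → c = c' →
      B ![a', b', c'] 0 = B ![a, b, c] 0 := by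
    rintro _ _ _ _ _ _ rfl rfl rfl; rfl
  exact (hw _ _ _ _ _ _ t0 t1 t2).trans (lhs.trans (congrArg (fun w => B w 0) hx))

/-- every 3-biquandle on `ℤ/2ℤ` is either the identity or is isomorphic
(as a 3-biquandle) to the Gaussian 3-biquandle `B_G(x_1,x_2,x_3) = (x_1+1,x_2+1,x_3+1)`. -/
theorem biquandle_zmod2_classification
    (B : (Fin 3 → ZMod 2) → (Fin 3 → ZMod 2)) (hB : IsBiquandle 3 B) :
    B = id ∨ ∃ φ : ZMod 2 ≃ ZMod 2,
      ∀ x : Fin 3 → ZMod 2, (fun i => φ (B x i)) = (fun i => φ (x i) + 1) := by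
  by_cases hid : B = id
  · exact Or.inl hid
  refine Or.inr ⟨Equiv.refl _, ?_⟩
  have vec : ∀ x : Fin 3 → ZMod 2, ![x 0, x 1, x 2] = x := by
    intro x; funext j; fin_cases j <;> rfl
  have coord : ∀ (x : Fin 3 → ZMod 2) (i : Fin 3),
      B x i = B (x ∘ Equiv.swap 0 i) 0 := by
    intro x i
    rw [hB.perm_equivariant]
    simp
  have ne_add_one : ∀ a b : ZMod 2, a ≠ b → a = b + 1 := by decide
  obtain ⟨w, hw⟩ : ∃ w : Fin 3 → ZMod 2, B w 0 = w 0 + 1 := by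
    obtain ⟨x, hx⟩ := Function.ne_iff.mp hid
    obtain ⟨i, hi⟩ := Function.ne_iff.mp hx
    refine ⟨x ∘ Equiv.swap 0 i, ?_⟩
    rw [← coord]
    simpa using ne_add_one _ _ hi
  have step : ∀ x y, B ![x, y, w 0 + 1] 0 = B ![x, y, w 0] 0 := by
    intro x y
    have := far_comm_coord hB x y (w 0) (w 1) (w 2)
    rwa [vec, hw] at this
  have indep : ∀ x y z, B ![x, y, z] 0 = B ![x, y, 0] 0 := by
    have cases2 : ∀ a : ZMod 2, a = 0 ∨ a = 1 := by decide
    intro x y z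
    have s := step x y
    have e : (1 : ZMod 2) + 1 = 0 := by decide
    rcases cases2 z with rfl | rfl
    · rfl
    · rcases cases2 (w 0) with h | h <;> rw [h] at s
      · simpa using s
      · rw [e] at s; exact s.symm
  have symm : ∀ x y z, B ![x, y, z] 0 = B ![x, z, y] 0 := by
    intro x y z
    have h := congrFun (hB.perm_equivariant (Equiv.swap 1 2) ![x, z, y]) 0
    have e : (![x, z, y] ∘ Equiv.swap (1 : Fin 3) 2) = ![x, y, z] := by
      funext j; fin_cases j <;> rfl
    rw [e] at h
    exact h
  -- `B` acts coordinatewise by `g a = B ![a, 0, 0] 0`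
  have act : ∀ x i, B x i = B ![x i, 0, 0] 0 := by
    intro x i
    rw [coord, ← vec (x ∘ Equiv.swap 0 i), indep, symm, indep]
    simp
  have inv : ∀ a, B ![B ![a, 0, 0] 0, 0, 0] 0 = a := by
    intro a
    have h := congrFun (hB.involutive ![a, 0, 0]) 0
    rw [act] at h
    exact h
  have moves : B ![w 0, 0, 0] 0 = w 0 + 1 := (act w 0).symm.trans hw
  have shift : ∀ a, B ![a, 0, 0] 0 = a + 1 := by
    intro a
    apply ne_add_one
    intro ha
    by_cases h : a = w 0
    · rw [h, moves] at ha
      simp at ha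
    · have h' := inv (w 0)
      rw [moves, ← ne_add_one _ _ h, ha] at h'
      exact h h'
  intro x
  funext i
  simp only [Equiv.refl_apply]
  rw [act, shift]
end

section
/- Let n ≥ 2. The assignment a_i ↦ id, b_i ↦ id, c_i ↦ (i, i+1), c_i^{-1} ↦ (i, i+1), v_i ↦ (i, i+1) (where (i, i+1) denotes the transposition of i and i+1 in the symmetric group Σ_n) respects all defining relations (A1)–(A11) and (V1)–(V4) of the virtual surface singular braid monoid VSSB_n, and hence extends to a monoid homomorphism ρ_n : VSSB_n → Σ_n. -/
/-! Adjacent transpositions are involutions (`adj_mul_self`), commute when far apart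
(`adj_comm`), and satisfy the braid relation (`adj_braid`). After substituting the images of the
generators, each defining relation is trivial or a consequence of these three facts:
in (A6) and (A7) the word being squared is `s_j (s_l s_i) s_j`, a conjugate of a product of two
commuting involutions, and in (A11) it is the conjugate `s_i s_k s_i` of an involution. The map on
the free monoid is therefore constant on congruence classes and descends to the quotient. -/

/-- The five types of standard generators of the virtual surface singular braid monoid:
`a_i`, `b_i`, `c_i`, `c_i⁻¹` and the virtual crossing `v_i`. -/
inductive GT : Type
  | a : GT
  | b : GT
  | c : GT
  | cinv : GT
  | v : GT
  deriving DecidableEq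

/-- The generators of `VSSB_n`: a generator type together with a strand position
`i ∈ {1, …, n-1}` (encoded `0`-based as `Fin (n-1)`). -/
def VGen (n : ℕ) := GT × Fin (n - 1)

/-- The generator of type `t` at position `i`, as an element of the free monoid. -/
def gg {n : ℕ} (t : GT) (i : Fin (n - 1)) : FreeMonoid (VGen n) := FreeMonoid.of (t, i)

/-- The defining relations (A1)–(A11) and (V1)–(V4) of the virtual surface singular
braid monoid `VSSB_n`. Here `x_i, y_i` range over `{a_i, b_i, c_i, c_i⁻¹}`
(i.e. generator types `≠ GT.v`). -/
inductive VRel (n : ℕ) : FreeMonoid (VGen n) → FreeMonoid (VGen n) → Prop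
  | A1l (i : Fin (n-1)) : VRel n (gg .c i * gg .cinv i) 1
  | A1r (i : Fin (n-1)) : VRel n (gg .cinv i * gg .c i) 1
  | A2 (s t : GT) (hs : s ≠ .v) (ht : t ≠ .v) (i j : Fin (n-1))
      (h : (i : ℕ) + 1 < j ∨ (j : ℕ) + 1 < i) :
      VRel n (gg s i * gg t j) (gg t j * gg s i)
  | A3 (s : GT) (hs : s ≠ .v) (i k : Fin (n-1)) (h : (k : ℕ) = i + 1 ∨ (i : ℕ) = k + 1) :
      VRel n (gg s i * gg .c k * gg .c i) (gg .c k * gg .c i * gg s k)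
  | A4 (s : GT) (hs : s ≠ .v) (i k : Fin (n-1)) (h : (k : ℕ) = i + 1 ∨ (i : ℕ) = k + 1) :
      VRel n (gg s i * gg .cinv k * gg .cinv i) (gg .cinv k * gg .cinv i * gg s k)
  | A5 (i k : Fin (n-1)) (h : (k : ℕ) = i + 1 ∨ (i : ℕ) = k + 1) :
      VRel n (gg .a i * gg .b k) (gg .b k * gg .a i)
  | A6 (i j l : Fin (n-1)) (hj : (j : ℕ) + 1 = i) (hl : (l : ℕ) + 2 = i) :
      VRel n (gg .a i * gg .b l * (gg .c j * gg .c l * gg .c i * gg .c j) ^ 2)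
        (gg .a i * gg .b l)
  | A7 (i j l : Fin (n-1)) (hj : (j : ℕ) + 1 = i) (hl : (l : ℕ) + 2 = i) :
      VRel n (gg .b i * gg .a l * (gg .c j * gg .c l * gg .c i * gg .c j) ^ 2)
        (gg .b i * gg .a l)
  | A8 (i : Fin (n-1)) : VRel n (gg .a i * gg .a i) (gg .a i)
  | A9 (i : Fin (n-1)) : VRel n (gg .b i * gg .b i) (gg .b i)
  | A10 (i : Fin (n-1)) :
      VRel n (gg .a i * gg .b i * gg .c i * gg .c i) (gg .a i * gg .b i)
  | A11 (i k : Fin (n-1)) (h : (k : ℕ) = i + 1 ∨ (i : ℕ) = k + 1) :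
      VRel n (gg .a i * gg .b k * (gg .c i * gg .c k * gg .c i) ^ 2) (gg .a i * gg .b k)
  | V1 (t : GT) (i j : Fin (n-1)) (h : (i : ℕ) + 1 < j ∨ (j : ℕ) + 1 < i) :
      VRel n (gg .v i * gg t j) (gg t j * gg .v i)
  | V2 (i : Fin (n-1)) : VRel n (gg .v i * gg .v i) 1
  | V3 (t : GT) (i j : Fin (n-1)) (h : (j : ℕ) = i + 1 ∨ (i : ℕ) = j + 1) :
      VRel n (gg t i * gg .v j * gg .v i) (gg .v j * gg .v i * gg t j)
  | V4a (i : Fin (n-1)) : VRel n (gg .a i * gg .v i) (gg .v i * gg .a i)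
  | V4b (i : Fin (n-1)) : VRel n (gg .b i * gg .v i) (gg .v i * gg .b i)

/-- The virtual surface singular braid monoid `VSSB_n`: the quotient of the free monoid
on the generators by the congruence generated by the relations (A1)–(A11), (V1)–(V4). -/
abbrev VSSB (n : ℕ) := (conGen (VRel n)).Quotient

/-- The class of a word in `VSSB_n`. -/
abbrev VSSB.mk {n : ℕ} (w : FreeMonoid (VGen n)) : VSSB n := (conGen (VRel n)).mk' w

/-- The `i`-th strand, as an element of `Fin n`. -/
def strandLo {n : ℕ} (i : Fin (n - 1)) : Fin n := ⟨i.1, by have := i.2; omega⟩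

/-- The `(i+1)`-st strand, as an element of `Fin n`. -/
def strandHi {n : ℕ} (i : Fin (n - 1)) : Fin n := ⟨i.1 + 1, by have := i.2; omega⟩

/-- The adjacent transposition exchanging strands `i` and `i + 1`. -/
def adj {n : ℕ} (i : Fin (n - 1)) : Equiv.Perm (Fin n) :=
  Equiv.swap (strandLo i) (strandHi i)

lemma adj_mul_self {n : ℕ} (i : Fin (n - 1)) : adj i * adj i = 1 :=
  Equiv.swap_mul_self _ _

lemma adj_comm {n : ℕ} (i j : Fin (n - 1)) (h : (i : ℕ) + 1 < j ∨ (j : ℕ) + 1 < i) :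
    adj i * adj j = adj j * adj i := by
  refine (Equiv.Perm.disjoint_swap_swap ?_).commute
  simp [strandLo, strandHi]
  omega

lemma adj_braid_succ {n : ℕ} (i k : Fin (n - 1)) (h : (k : ℕ) = i + 1) :
    adj i * adj k * adj i = adj k * adj i * adj k := by
  have e : strandLo k = strandHi i := by simp [strandLo, strandHi, h]
  have h1 : strandLo i ≠ strandHi i := by simp [strandLo, strandHi]
  have h2 : strandLo i ≠ strandHi k := by simp [strandLo, strandHi, h]; omega
  have h3 : strandHi i ≠ strandHi k := by simp [strandHi, h]
  unfold adj
  rw [e, Equiv.swap_mul_swap_mul_swap h1 h2, Equiv.swap_comm (strandLo i) (strandHi i),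
    Equiv.swap_comm (strandHi i) (strandHi k),
    Equiv.swap_mul_swap_mul_swap h3.symm h2.symm, Equiv.swap_comm]

lemma adj_braid {n : ℕ} (i k : Fin (n - 1)) (h : (k : ℕ) = i + 1 ∨ (i : ℕ) = k + 1) :
    adj i * adj k * adj i = adj k * adj i * adj k := by
  rcases h with h | h
  · exact adj_braid_succ i k h
  · exact (adj_braid_succ k i h).symm

lemma adj_conj_sq {n : ℕ} (i k : Fin (n - 1)) : (adj i * adj k * adj i) ^ 2 = 1 := by
  calc (adj i * adj k * adj i) ^ 2
      = adj i * adj k * (adj i * adj i) * adj k * adj i := by simp only [sq, mul_assoc]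
    _ = adj i * (adj k * adj k) * adj i := by rw [adj_mul_self]; simp only [mul_one, mul_assoc]
    _ = 1 := by rw [adj_mul_self, mul_one, adj_mul_self]

/-- The word occurring in (A6) and (A7) maps to an involution. -/
lemma adj_four_sq {n : ℕ} (i j l : Fin (n - 1)) (hl : (l : ℕ) + 2 = i) :
    (adj j * adj l * adj i * adj j) ^ 2 = 1 := by
  have hc : adj l * adj i = adj i * adj l := adj_comm l i (by omega)
  calc (adj j * adj l * adj i * adj j) ^ 2
      = adj j * (adj l * adj i) * (adj j * adj j) * (adj l * adj i) * adj j := by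
        simp only [sq, mul_assoc]
    _ = adj j * (adj l * (adj i * adj i) * adj l) * adj j := by
        rw [adj_mul_self, mul_one]
        nth_rewrite 2 [hc]
        simp only [mul_assoc]
    _ = 1 := by simp only [adj_mul_self, mul_one]

/-- The assignment of the generators of `VSSB_n` to permutations. -/
def genPerm {n : ℕ} : VGen n → Equiv.Perm (Fin n)
  | (.a, _) => 1
  | (.b, _) => 1
  | (.c, i) => adj i
  | (.cinv, i) => adj i
  | (.v, i) => adj i

/-- The extension of `genPerm` to words. -/
def wordPerm (n : ℕ) : FreeMonoid (VGen n) →* Equiv.Perm (Fin n) := FreeMonoid.lift genPerm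

lemma wordPerm_gg {n : ℕ} (t : GT) (i : Fin (n - 1)) :
    wordPerm n (gg t i) = genPerm (t, i) := FreeMonoid.lift_eval_of _ _

/-- Every generator is sent to `1` or to the adjacent transposition of its position, so a
relation whose generator type is arbitrary only needs to be checked in these two cases. -/
lemma genPerm_cases (t : GT) :
    (∀ {n : ℕ} (i : Fin (n - 1)), genPerm (t, i) = 1) ∨
      (∀ {n : ℕ} (i : Fin (n - 1)), genPerm (t, i) = adj i) := by
  cases t <;> simp [genPerm]

lemma genPerm_comm {n : ℕ} (s t : GT) (i j : Fin (n - 1))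
    (h : (i : ℕ) + 1 < j ∨ (j : ℕ) + 1 < i) :
    (genPerm (s, i) * genPerm (t, j) : Equiv.Perm (Fin n)) =
      genPerm (t, j) * genPerm (s, i) := by
  rcases genPerm_cases s with hs | hs <;> rcases genPerm_cases t with ht | ht <;>
    simp [hs, ht, adj_comm i j h]

lemma genPerm_braid {n : ℕ} (t : GT) (i k : Fin (n - 1))
    (h : (k : ℕ) = i + 1 ∨ (i : ℕ) = k + 1) :
    genPerm (t, i) * adj k * adj i = adj k * adj i * genPerm (t, k) := by
  rcases genPerm_cases t with ht | ht
  · simp [ht]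
  · rw [ht, ht, adj_braid i k h]

lemma wordPerm_rel {n : ℕ} {x y : FreeMonoid (VGen n)} (h : VRel n x y) :
    wordPerm n x = wordPerm n y := by
  cases h <;> simp only [map_mul, map_pow, map_one, wordPerm_gg]
  case A2 s t _ _ i j h => exact genPerm_comm s t i j h
  case A3 s _ i k h => exact genPerm_braid s i k h
  case A4 s _ i k h => exact genPerm_braid s i k h
  case A6 i j l hj hl => simp [genPerm, adj_four_sq i j l hl]
  case A7 i j l hj hl => simp [genPerm, adj_four_sq i j l hl]
  case A11 i k h => simp [genPerm, adj_conj_sq]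
  case V1 t i j h => exact genPerm_comm .v t i j h
  case V3 t i j h => exact genPerm_braid t i j h
  all_goals simp [genPerm, adj_mul_self]

/-- the assignment `a_i ↦ 1`, `b_i ↦ 1`, `c_i ↦ (i, i+1)`,
`c_i⁻¹ ↦ (i, i+1)`, `v_i ↦ (i, i+1)` respects all defining relations of `VSSB_n` and
hence extends to a monoid homomorphism `ρ_n : VSSB_n →* Σ_n`. -/
theorem exists_rho (n : ℕ) (hn : 2 ≤ n) :
    ∃ ρ : VSSB n →* Equiv.Perm (Fin n), ∀ i : Fin (n - 1),
      ρ (VSSB.mk (gg .a i)) = 1 ∧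
      ρ (VSSB.mk (gg .b i)) = 1 ∧
      ρ (VSSB.mk (gg .c i)) = Equiv.swap (strandLo i) (strandHi i) ∧
      ρ (VSSB.mk (gg .cinv i)) = Equiv.swap (strandLo i) (strandHi i) ∧
      ρ (VSSB.mk (gg .v i)) = Equiv.swap (strandLo i) (strandHi i) := by
  have hle : conGen (VRel n) ≤ Con.ker (wordPerm n) :=
    Con.conGen_le.mpr fun _ _ h => wordPerm_rel h
  refine ⟨(conGen (VRel n)).lift (wordPerm n) hle, fun i => ?_⟩
  exact ⟨wordPerm_gg .a i, wordPerm_gg .b i, wordPerm_gg .c i, wordPerm_gg .cinv i,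
    wordPerm_gg .v i⟩
end
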